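/- For every n ≥ 1 and every t ∈ ℝ, the recurrence coefficient α_n satisfies the extended relativistic Toda lattice equation α_n'(t) = p·α_n(t)·(α_{n−1}(t) + β_{n−1}(t) − α_{n+1}(t) − β_n(t)) + q·α_n(t)·( 1/β_{n−1}(t) − 1/β_n(t) ). -/

import Mathlib

open Polynomial

/-- The moment functional `L^{(t)}` applied to `x^m · P(x)`, where the moments are
`L^{(t)}[x^k] = ν k t`. -/
noncomputable def Lmom (ν : ℤ → ℝ → ℂ) (m : ℤ) (P : Polynomial ℂ) (t : ℝ) : ℂ :=
  P.sum fun j c => c * ν (m + (j : ℤ)) t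

/-!
L-orthogonality makes `x⁻ⁿ Q_n²` a substitute for `Q_n`: for a polynomial `P` of degree at most
`m ≤ n`, only the top coefficient of `P` contributes to `L[x⁻ᵐ P Q_n]`, which therefore equals
that coefficient times `σ_n = L[Q_n]`. In particular `σ_n = L[x⁻ⁿ Q_n²]`. When this is
differentiated in time, the coefficients of `Q_n` contribute `2 L[x⁻ⁿ Q_n' Q_n] = 0`, because `Q_n`
is monic, and the moments contribute `-(p L[x¹⁻ⁿ Q_n²] + q L[x⁻¹⁻ⁿ Q_n²])`. The recurrence relation
evaluates both terms, whence

`σ_n' = -(p (α_{n+2} + β_{n+1} + α_{n+1}) + q / β_{n+1}) σ_n`,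

and the lattice equation is the logarithmic derivative of `α_{n+2} = σ_{n+1} / σ_n`.
-/

section LaurentMoment

variable {R : Type*} [CommRing R]

/-- The functional `P ↦ L[x^m P]` on polynomials, where `L` is the linear functional on Laurent
polynomials with moments `L[x^k] = μ k`. -/
noncomputable def laurentMoment (μ : ℤ → R) (m : ℤ) : R[X] →ₗ[R] R :=
  lsum fun j => LinearMap.mulRight R (μ (m + j))

theorem Lmom_eq_laurentMoment (ν : ℤ → ℝ → ℂ) (m : ℤ) (P : ℂ[X]) (t : ℝ) :
    Lmom ν m P t = laurentMoment (ν · t) m P :=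
  rfl

theorem laurentMoment_monomial (μ : ℤ → R) (m : ℤ) (j : ℕ) (c : R) :
    laurentMoment μ m (monomial j c) = c * μ (m + j) := by
  simp [laurentMoment, sum_monomial_index]

theorem laurentMoment_one (μ : ℤ → R) (m : ℤ) : laurentMoment μ m 1 = μ m := by
  simpa using laurentMoment_monomial μ m 0 1

theorem laurentMoment_C_mul (μ : ℤ → R) (m : ℤ) (c : R) (P : R[X]) :
    laurentMoment μ m (C c * P) = c * laurentMoment μ m P := by
  rw [C_mul', map_smul, smul_eq_mul]

theorem laurentMoment_X_pow_mul (μ : ℤ → R) (m : ℤ) (j : ℕ) (P : R[X]) :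
    laurentMoment μ m (X ^ j * P) = laurentMoment μ (m + j) P := by
  induction P using Polynomial.induction_on' with
  | add P S hP hS => rw [mul_add, map_add, map_add, hP, hS]
  | monomial i c =>
    rw [X_pow_mul_monomial, laurentMoment_monomial, laurentMoment_monomial, Nat.cast_add,
      add_assoc, add_comm (j : ℤ)]

theorem laurentMoment_X_mul (μ : ℤ → R) (m : ℤ) (P : R[X]) :
    laurentMoment μ m (X * P) = laurentMoment μ (m + 1) P := by
  simpa using laurentMoment_X_pow_mul μ m 1 P

theorem laurentMoment_mul_eq_sum_range (μ : ℤ → R) (m : ℤ) {P : R[X]} (S : R[X]) {N : ℕ}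
    (hP : P.natDegree < N) :
    laurentMoment μ m (P * S) =
      ∑ j ∈ Finset.range N, P.coeff j * laurentMoment μ (m + j) S := by
  conv_lhs => rw [P.as_sum_range_C_mul_X_pow' hP, Finset.sum_mul, map_sum]
  simp only [mul_assoc, laurentMoment_C_mul, laurentMoment_X_pow_mul]

theorem laurentMoment_eq_sum_range (μ : ℤ → R) (m : ℤ) {P : R[X]} {N : ℕ}
    (hP : P.natDegree < N) :
    laurentMoment μ m P = ∑ j ∈ Finset.range N, P.coeff j * μ (m + j) := by
  simpa [laurentMoment_one] using laurentMoment_mul_eq_sum_range μ m 1 hP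

theorem laurentMoment_neg_shift_add_shift (μ : ℤ → R) (p q : R) (m : ℤ) (P : R[X]) :
    laurentMoment (fun k => -(p * μ (k + 1) + q * μ (k - 1))) m P =
      -(p * laurentMoment μ (m + 1) P + q * laurentMoment μ (m - 1) P) := by
  induction P using Polynomial.induction_on' with
  | add P S hP hS => simp only [map_add, hP, hS]; ring
  | monomial j c =>
    simp only [laurentMoment_monomial, add_right_comm m 1, sub_add_eq_add_sub]
    ring

end LaurentMoment

section LOrthogonal

variable {R : Type*} [CommRing R] {μ : ℤ → R} {α β : ℕ → R} {Q : ℕ → R[X]}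

/-- `Q` is the sequence of monic L-orthogonal polynomials for the functional with moments `μ`. -/
structure IsLOrthogonal (μ : ℤ → R) (Q : ℕ → R[X]) : Prop where
  monic : ∀ n, (Q n).Monic
  natDegree_eq : ∀ n, (Q n).natDegree = n
  laurentMoment_eq_zero : ∀ n : ℕ, ∀ s < n, laurentMoment μ (-(n : ℤ) + s) (Q n) = 0

/-- The three-term recurrence of L-orthogonal polynomials. The condition `α 1 = 0` removes the term
with the meaningless index `0 - 1`, so that `n = 0` reads `Q 1 = X - β 1` when `Q 0 = 1`. -/
structure IsLRecurrence (α β : ℕ → R) (Q : ℕ → R[X]) : Prop where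
  alpha_one : α 1 = 0
  succ : ∀ n, Q (n + 1) = (X - C (β (n + 1))) * Q n - C (α (n + 1)) * (X * Q (n - 1))

theorem IsLOrthogonal.coeff_self (hQ : IsLOrthogonal μ Q) (n : ℕ) : (Q n).coeff n = 1 := by
  simpa only [hQ.natDegree_eq] using (hQ.monic n).coeff_natDegree

theorem IsLOrthogonal.zero_eq_one (hQ : IsLOrthogonal μ Q) : Q 0 = 1 :=
  (hQ.monic 0).natDegree_eq_zero.1 (hQ.natDegree_eq 0)

theorem IsLOrthogonal.laurentMoment_mul (hQ : IsLOrthogonal μ Q) {m n : ℕ} (hmn : m ≤ n)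
    {P : R[X]} (hP : P.natDegree ≤ m) :
    laurentMoment μ (-m) (P * Q n) = P.coeff m * laurentMoment μ 0 (Q n) := by
  rw [laurentMoment_mul_eq_sum_range μ _ _ (Nat.lt_succ_of_le hP), Finset.sum_range_succ,
    neg_add_cancel, add_eq_right]
  refine Finset.sum_eq_zero fun j hj => ?_
  have hj : j < m := Finset.mem_range.1 hj
  have horth := hQ.laurentMoment_eq_zero n (n - m + j) (by omega)
  rw [show -(n : ℤ) + (n - m + j : ℕ) = -m + j by push_cast [hmn]; ring] at horth
  rw [horth, mul_zero]

theorem IsLOrthogonal.laurentMoment_mul_of_lt (hQ : IsLOrthogonal μ Q) {k m n : ℕ} (hkm : k < m)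
    (hmn : m ≤ n) : laurentMoment μ (-m) (Q k * Q n) = 0 := by
  have hdeg : (Q k).natDegree < m := (hQ.natDegree_eq k).trans_lt hkm
  rw [hQ.laurentMoment_mul hmn hdeg.le, coeff_eq_zero_of_natDegree_lt hdeg, zero_mul]

theorem IsLOrthogonal.laurentMoment_mul_of_le (hQ : IsLOrthogonal μ Q) {m n : ℕ} (hmn : m ≤ n) :
    laurentMoment μ (-m) (Q m * Q n) = laurentMoment μ 0 (Q n) := by
  rw [hQ.laurentMoment_mul hmn (hQ.natDegree_eq m).le, hQ.coeff_self, one_mul]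

theorem IsLRecurrence.laurentMoment_add_one_mul (hrec : IsLRecurrence α β Q) (μ : ℤ → R) (m : ℤ)
    (n : ℕ) (P : R[X]) :
    laurentMoment μ (m + 1) (P * Q n) =
      laurentMoment μ m (P * Q (n + 1)) + β (n + 1) * laurentMoment μ m (P * Q n) +
        α (n + 1) * laurentMoment μ (m + 1) (P * Q (n - 1)) := by
  have hXQ : X * (P * Q n) =
      P * Q (n + 1) + C (β (n + 1)) * (P * Q n) + C (α (n + 1)) * (X * (P * Q (n - 1))) := by
    rw [hrec.succ n]; ring
  simpa only [map_add, laurentMoment_C_mul, laurentMoment_X_mul] using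
    congrArg (laurentMoment μ m) hXQ

theorem IsLOrthogonal.laurentMoment_zero_succ (hQ : IsLOrthogonal μ Q)
    (hrec : IsLRecurrence α β Q) (n : ℕ) :
    laurentMoment μ 0 (Q (n + 1)) = α (n + 2) * laurentMoment μ 0 (Q n) := by
  have horth (k : ℕ) : laurentMoment μ (-1) (Q (k + 1)) = 0 := by
    simpa [hQ.zero_eq_one] using hQ.laurentMoment_mul_of_lt Nat.zero_lt_one (Nat.le_add_left 1 k)
  simpa [horth] using hrec.laurentMoment_add_one_mul μ (-1) (n + 1) 1

theorem IsLOrthogonal.laurentMoment_zero_ne_zero [NoZeroDivisors R] (hQ : IsLOrthogonal μ Q)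
    (hrec : IsLRecurrence α β Q) (hμ : μ 0 ≠ 0) (hα : ∀ n, α (n + 2) ≠ 0) (n : ℕ) :
    laurentMoment μ 0 (Q n) ≠ 0 := by
  induction n with
  | zero => rwa [hQ.zero_eq_one, laurentMoment_one]
  | succ n ih => rw [hQ.laurentMoment_zero_succ hrec]; exact mul_ne_zero (hα n) ih

theorem IsLOrthogonal.laurentMoment_neg_add_one_mul_self (hQ : IsLOrthogonal μ Q)
    (hrec : IsLRecurrence α β Q) (n : ℕ) :
    laurentMoment μ (-n + 1) (Q n * Q n) =
      (α (n + 2) + β (n + 1) + α (n + 1)) * laurentMoment μ 0 (Q n) := by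
  have hprev : α (n + 1) * laurentMoment μ (-n + 1) (Q n * Q (n - 1)) =
      α (n + 1) * laurentMoment μ 0 (Q n) := by
    cases n with
    | zero => rw [hrec.alpha_one, zero_mul, zero_mul]
    | succ k =>
      rw [mul_comm (Q _), Nat.add_sub_cancel, Nat.cast_succ, neg_add, neg_add_cancel_right,
        hQ.laurentMoment_mul_of_le k.le_succ]
  rw [hrec.laurentMoment_add_one_mul, hprev, hQ.laurentMoment_mul_of_le n.le_succ,
    hQ.laurentMoment_mul_of_le le_rfl, hQ.laurentMoment_zero_succ hrec]
  ring

theorem IsLOrthogonal.beta_mul_laurentMoment_neg_sub_one_mul_self (hQ : IsLOrthogonal μ Q)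
    (hrec : IsLRecurrence α β Q) (n : ℕ) :
    β (n + 1) * laurentMoment μ (-n - 1) (Q n * Q n) = laurentMoment μ 0 (Q n) := by
  have hprev : α (n + 1) * laurentMoment μ (-n) (Q n * Q (n - 1)) = 0 := by
    cases n with
    | zero => rw [hrec.alpha_one, zero_mul]
    | succ k =>
      rw [mul_comm (Q _), Nat.add_sub_cancel, hQ.laurentMoment_mul_of_lt k.lt_succ_self le_rfl,
        mul_zero]
  have hnext : laurentMoment μ (-n - 1) (Q n * Q (n + 1)) = 0 := by
    rw [← neg_add', ← Nat.cast_succ]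
    exact hQ.laurentMoment_mul_of_lt n.lt_succ_self le_rfl
  have h := hrec.laurentMoment_add_one_mul μ (-n - 1) n (Q n)
  rw [sub_add_cancel, hprev, hnext, hQ.laurentMoment_mul_of_le le_rfl, zero_add, add_zero] at h
  exact h.symm

end LOrthogonal

section CoeffDeriv

variable {𝕜 A : Type*} [NontriviallyNormedField 𝕜] [NormedCommRing A] [NormedAlgebra 𝕜 A]
  {P S : 𝕜 → A[X]} {P' S' : A[X]} {t : 𝕜} {N : ℕ}

/-- `P'` is the coefficientwise derivative at `t` of the family of polynomials `P`. Since `A[X]`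
carries no topology, this is not an instance of `HasDerivAt`. -/
def HasCoeffDerivAt (P : 𝕜 → A[X]) (P' : A[X]) (t : 𝕜) : Prop :=
  ∀ j, HasDerivAt (fun s => (P s).coeff j) (P'.coeff j) t

theorem exists_hasCoeffDerivAt (hdeg : ∀ s, (P s).natDegree ≤ N)
    (hP : ∀ j, DifferentiableAt 𝕜 (fun s => (P s).coeff j) t) : ∃ P', HasCoeffDerivAt P P' t := by
  refine ⟨∑ j ∈ Finset.range (N + 1), monomial j (deriv (fun s => (P s).coeff j) t), fun j => ?_⟩
  refine (hP j).hasDerivAt.congr_deriv ?_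
  rcases lt_or_ge N j with hj | hj
  · have hzero (s : 𝕜) : (P s).coeff j = 0 :=
      coeff_eq_zero_of_natDegree_lt ((hdeg s).trans_lt hj)
    simp [hzero, finsetSum_coeff, coeff_monomial]
  · simp [finsetSum_coeff, coeff_monomial, Nat.lt_succ_of_le hj]

theorem HasCoeffDerivAt.coeff_eq_zero (hP : HasCoeffDerivAt P P' t) {j : ℕ} {c : A}
    (hc : ∀ s, (P s).coeff j = c) : P'.coeff j = 0 := by
  have hconst : HasDerivAt (fun s => (P s).coeff j) 0 t := by
    simpa only [hc] using hasDerivAt_const t c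
  exact (hP j).unique hconst

theorem HasCoeffDerivAt.natDegree_le (hP : HasCoeffDerivAt P P' t)
    (hdeg : ∀ s, (P s).natDegree ≤ N) : P'.natDegree ≤ N :=
  natDegree_le_iff_coeff_eq_zero.2 fun _ hj =>
    hP.coeff_eq_zero fun s => coeff_eq_zero_of_natDegree_lt ((hdeg s).trans_lt hj)

theorem HasCoeffDerivAt.mul (hP : HasCoeffDerivAt P P' t) (hS : HasCoeffDerivAt S S' t) :
    HasCoeffDerivAt (fun s => P s * S s) (P' * S t + P t * S') t := by
  intro j
  simp only [coeff_add, coeff_mul, ← Finset.sum_add_distrib]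
  exact HasDerivAt.fun_sum fun i _ => (hP i.1).mul (hS i.2)

theorem HasCoeffDerivAt.hasDerivAt_laurentMoment {ν : ℤ → 𝕜 → A} {ν' : ℤ → A}
    (hP : HasCoeffDerivAt P P' t) (hdeg : ∀ s, (P s).natDegree ≤ N)
    (hν : ∀ k, HasDerivAt (ν k) (ν' k) t) (m : ℤ) :
    HasDerivAt (fun s => laurentMoment (ν · s) m (P s))
      (laurentMoment (ν · t) m P' + laurentMoment ν' m (P t)) t := by
  have hdeg' (s : 𝕜) : (P s).natDegree < N + 1 := Nat.lt_succ_of_le (hdeg s)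
  simp only [laurentMoment_eq_sum_range _ m (hdeg' _),
    laurentMoment_eq_sum_range _ m (Nat.lt_succ_of_le (hP.natDegree_le hdeg)),
    ← Finset.sum_add_distrib]
  exact HasDerivAt.fun_sum fun j _ => (hP j).mul (hν (m + j))

end CoeffDeriv

section TodaLattice

variable {𝕜 K : Type*} [NontriviallyNormedField 𝕜] [NontriviallyNormedField K]
  [NormedAlgebra 𝕜 K] {p q : K} {ν : ℤ → 𝕜 → K} {Q : ℕ → 𝕜 → K[X]} {t : 𝕜}

theorem hasDerivAt_laurentMoment_zero
    (hν : ∀ k, HasDerivAt (ν k) (-(p * ν (k + 1) t + q * ν (k - 1) t)) t)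
    (hQ : ∀ s, IsLOrthogonal (ν · s) (Q · s)) {n : ℕ}
    (hQdiff : ∀ j, DifferentiableAt 𝕜 (fun s => (Q n s).coeff j) t) :
    HasDerivAt (fun s => laurentMoment (ν · s) 0 (Q n s))
      (-(p * laurentMoment (ν · t) (-n + 1) (Q n t * Q n t) +
        q * laurentMoment (ν · t) (-n - 1) (Q n t * Q n t))) t := by
  have hdeg (s : 𝕜) : (Q n s).natDegree ≤ n := ((hQ s).natDegree_eq n).le
  obtain ⟨Q', hQ'⟩ := exists_hasCoeffDerivAt hdeg hQdiff
  have hQ'zero : laurentMoment (ν · t) (-n) (Q' * Q n t) = 0 := by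
    rw [(hQ t).laurentMoment_mul le_rfl (hQ'.natDegree_le hdeg),
      hQ'.coeff_eq_zero fun s => (hQ s).coeff_self n, zero_mul]
  have hdegSq (s : 𝕜) : (Q n s * Q n s).natDegree ≤ n + n :=
    natDegree_mul_le_of_le (hdeg s) (hdeg s)
  have hderiv := (hQ'.mul hQ').hasDerivAt_laurentMoment hdegSq hν (-n)
  rw [map_add, mul_comm (Q n t) Q', hQ'zero, zero_add, zero_add,
    laurentMoment_neg_shift_add_shift (ν · t)] at hderiv
  simpa only [(hQ _).laurentMoment_mul_of_le le_rfl] using hderiv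

theorem hasDerivAt_laurentMoment_zero_of_isLRecurrence {α β : ℕ → K}
    (hν : ∀ k, HasDerivAt (ν k) (-(p * ν (k + 1) t + q * ν (k - 1) t)) t)
    (hQ : ∀ s, IsLOrthogonal (ν · s) (Q · s)) (hrec : IsLRecurrence α β (Q · t)) {n : ℕ}
    (hQdiff : ∀ j, DifferentiableAt 𝕜 (fun s => (Q n s).coeff j) t)
    (hσ : laurentMoment (ν · t) 0 (Q n t) ≠ 0) :
    HasDerivAt (fun s => laurentMoment (ν · s) 0 (Q n s))
      (-(p * (α (n + 2) + β (n + 1) + α (n + 1)) + q * (1 / β (n + 1))) *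
        laurentMoment (ν · t) 0 (Q n t)) t := by
  have hβσ := (hQ t).beta_mul_laurentMoment_neg_sub_one_mul_self hrec n
  have hβ : β (n + 1) ≠ 0 := left_ne_zero_of_mul (hβσ.trans_ne hσ)
  refine (hasDerivAt_laurentMoment_zero hν hQ hQdiff).congr_deriv ?_
  rw [(hQ t).laurentMoment_neg_add_one_mul_self hrec, ← hβσ]
  field_simp

theorem stmt_1_general {α β : ℕ → 𝕜 → K}
    (hν : ∀ k, HasDerivAt (ν k) (-(p * ν (k + 1) t + q * ν (k - 1) t)) t)
    (hν0 : ν 0 t ≠ 0)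
    (hQdiff : ∀ n j, DifferentiableAt 𝕜 (fun s => (Q n s).coeff j) t)
    (hQ : ∀ s, IsLOrthogonal (ν · s) (Q · s))
    (hrec : ∀ s, IsLRecurrence (α · s) (β · s) (Q · s))
    (hα : ∀ n, α (n + 2) t ≠ 0) (n : ℕ) :
    HasDerivAt (α (n + 2))
      (p * α (n + 2) t * (α (n + 1) t + β (n + 1) t - α (n + 3) t - β (n + 2) t) +
        q * α (n + 2) t * (1 / β (n + 1) t - 1 / β (n + 2) t)) t := by
  have hσ := (hQ t).laurentMoment_zero_ne_zero (hrec t) hν0 hα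
  have hσ' (k : ℕ) :=
    hasDerivAt_laurentMoment_zero_of_isLRecurrence hν hQ (hrec t) (hQdiff k) (hσ k)
  have hquot : α (n + 2) =ᶠ[nhds t]
      fun s => laurentMoment (ν · s) 0 (Q (n + 1) s) / laurentMoment (ν · s) 0 (Q n s) := by
    filter_upwards [(hσ' n).continuousAt.eventually_ne (hσ n)] with s hs
    exact eq_div_of_mul_eq hs ((hQ s).laurentMoment_zero_succ (hrec s) n).symm
  have hderiv := ((hσ' (n + 1)).fun_div (hσ' n) (hσ n)).congr_of_eventuallyEq hquot
  rw [(hQ t).laurentMoment_zero_succ (hrec t) n] at hderiv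
  refine hderiv.congr_deriv ?_
  rw [div_eq_iff (pow_ne_zero 2 (hσ n))]
  ring

end TodaLattice

theorem stmt_1 (p q : ℂ) (ν : ℤ → ℝ → ℂ)
    (hνdiff : ∀ k, Differentiable ℝ (ν k))
    (hνderiv : ∀ k t, deriv (ν k) t = -(p * ν (k + 1) t + q * ν (k - 1) t))
    (hν0 : ∀ t, ν 0 t ≠ 0)
    (Q : ℕ → ℝ → Polynomial ℂ)
    (hQ0 : ∀ t, Q 0 t = 1)
    (hQmonic : ∀ n t, (Q n t).Monic)
    (hQdeg : ∀ n t, (Q n t).natDegree = n)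
    (hQdiff : ∀ n j, Differentiable ℝ fun t => (Q n t).coeff j)
    (β α : ℕ → ℝ → ℂ)
    (hβdiff : ∀ n, Differentiable ℝ (β n))
    (hαdiff : ∀ n, Differentiable ℝ (α n))
    (hβ0 : ∀ t, β 0 t = 1) (hα0 : ∀ t, α 0 t = -1) (hα1 : ∀ t, α 1 t = 0)
    (hβne : ∀ n, 1 ≤ n → ∀ t, β n t ≠ 0)
    (hαne : ∀ n, 1 ≤ n → ∀ t, α (n + 1) t ≠ 0)
    (horth : ∀ n : ℕ, 1 ≤ n → ∀ s < n, ∀ t : ℝ, Lmom ν (-(n : ℤ) + (s : ℤ)) (Q n t) t = 0)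
    (hQ1 : ∀ t, Q 1 t = X - C (β 1 t))
    (hrec : ∀ n, 1 ≤ n → ∀ t,
      Q (n + 1) t = (X - C (β (n + 1) t)) * Q n t - C (α (n + 1) t) * (X * Q (n - 1) t)) :
    ∀ n, 1 ≤ n → ∀ t : ℝ,
      deriv (α n) t =
        p * α n t * (α (n - 1) t + β (n - 1) t - α (n + 1) t - β n t) +
          q * α n t * (1 / β (n - 1) t - 1 / β n t) := by
  have hQ (t : ℝ) : IsLOrthogonal (ν · t) (Q · t) :=
    ⟨(hQmonic · t), (hQdeg · t), fun n s hs =>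
      (Lmom_eq_laurentMoment ν _ _ t).symm.trans (horth n (Nat.one_le_of_lt hs) s hs t)⟩
  have hQrec (t : ℝ) : IsLRecurrence (α · t) (β · t) (Q · t) := by
    refine ⟨hα1 t, fun n => ?_⟩
    rcases n.eq_zero_or_pos with rfl | hn
    · simp [hQ1, hQ0, hα1]
    · exact hrec n hn t
  rintro (_ | _ | n) hn t
  · exact absurd hn (by decide)
  · simp [funext hα1]
  · exact (stmt_1_general (fun k => hνderiv k t ▸ (hνdiff k t).hasDerivAt) (hν0 t)
      (fun n j => hQdiff n j t) hQ hQrec (fun n => hαne (n + 1) n.succ_pos t) n).deriv
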